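/- Let G be a finitely generated virtually abelian group with a normal subgroup N of finite index that is isomorphic to ℤⁿ, let S be a finite set generating G as a monoid with weight function ω : S → ℕ₊, and let F be a subgroup of G contained in N. Define the weight of a right coset Fg to be ω(Fg) = min{ω(x) : x ∈ Fg}. Then the weighted growth series of the set of right cosets F\G, namely ∑_{n≥0} #{C ∈ F\G : ω(C) = n} zⁿ, is a rational power series. -/

import Mathlib

/-- The weight of a group element `g` with respect to a generating set `S` and a
weight function `ω`: the minimal total weight among all words over `S` representing `g`. -/
noncomputable def wordWeight {G : Type*} [Group G] (S : Set G) (ω : G → ℕ) (g : G) : ℕ :=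
  sInf {n | ∃ l : List G, (∀ x ∈ l, x ∈ S) ∧ l.prod = g ∧ (l.map ω).sum = n}

/-- The weight of a right coset `Fg`: the minimal weight of an element of the coset. -/
noncomputable def cosetWeight {G : Type*} [Group G] (S : Set G) (ω : G → ℕ)
    (F : Subgroup G) (C : Quotient (QuotientGroup.rightRel F)) : ℕ :=
  sInf {n | ∃ g : G, Quotient.mk (QuotientGroup.rightRel F) g = C ∧ wordWeight S ω g = n}

/-- A formal power series with integer coefficients is rational if it is the quotient
of two integer polynomials. -/
def IsRationalSeries (f : PowerSeries ℤ) : Prop :=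
  ∃ p q : Polynomial ℤ, q ≠ 0 ∧ f * (q : PowerSeries ℤ) = (p : PowerSeries ℤ)

/-!
Write `G` as a finite union of cosets `N * t`. The coset of `F` containing `n * t` is determined by
`t` and by the class of `n` in the abelian group `N / F`, and right multiplication by a generator
changes `t` to some `t'` and translates the class by an element that depends only on `t`. So a
finite automaton with labels in the commutative monoid `N / F × ℕ` computes the coset and the weight
of a word, and by Kleene's theorem the set of pairs (coset, weight) of words is semilinear. A
difference of semilinear sets is semilinear, hence so is the set of pairs in which the weight is
least possible, which is a copy of the set of cosets. Finally, a semilinear set graded by the weight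
is a finite union of finitely generated modules over positively graded monoids. Intersections of
such modules are again of this kind, so the theorem of Hilbert and Serre together with
inclusion–exclusion shows that the growth series is rational.
-/

open Pointwise

namespace IsRationalSeries

variable {f g : PowerSeries ℤ}

theorem coe (p : Polynomial ℤ) : IsRationalSeries p :=
  ⟨p, 1, one_ne_zero, by simp⟩

theorem add (hf : IsRationalSeries f) (hg : IsRationalSeries g) : IsRationalSeries (f + g) := by
  obtain ⟨p, q, hq, h⟩ := hf
  obtain ⟨p', q', hq', h'⟩ := hg
  refine ⟨p * q' + p' * q, q * q', mul_ne_zero hq hq', ?_⟩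
  push_cast
  linear_combination (q' : PowerSeries ℤ) * h + (q : PowerSeries ℤ) * h'

theorem coe_mul (p : Polynomial ℤ) (hf : IsRationalSeries f) :
    IsRationalSeries ((p : PowerSeries ℤ) * f) := by
  obtain ⟨p', q, hq, h⟩ := hf
  refine ⟨p * p', q, hq, ?_⟩
  push_cast
  linear_combination (p : PowerSeries ℤ) * h

theorem sub (hf : IsRationalSeries f) (hg : IsRationalSeries g) : IsRationalSeries (f - g) := by
  simpa [sub_eq_add_neg] using hf.add (hg.coe_mul (-1))

theorem of_coe_mul {p : Polynomial ℤ} (hp : p ≠ 0)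
    (hf : IsRationalSeries ((p : PowerSeries ℤ) * f)) : IsRationalSeries f := by
  obtain ⟨p', q, hq, h⟩ := hf
  refine ⟨p', p * q, mul_ne_zero hp hq, ?_⟩
  push_cast
  linear_combination h

theorem sum {ι : Type*} {I : Finset ι} {f : ι → PowerSeries ℤ}
    (hf : ∀ i ∈ I, IsRationalSeries (f i)) : IsRationalSeries (∑ i ∈ I, f i) :=
  Finset.sum_induction f IsRationalSeries (fun _ _ => add) (by simpa using coe 0) hf

end IsRationalSeries

section GrowthSeries

variable {α β : Type*} {w : α → ℕ} {s t : Set α}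

/-- Every value of the weight `w` is attained only finitely often on `s`, so that counting the
elements of `s` by weight makes sense. -/
def FiniteFibers (w : α → ℕ) (s : Set α) : Prop :=
  ∀ k, (s ∩ w ⁻¹' {k}).Finite

/-- The growth series `∑ₖ #{x ∈ s | w x = k} zᵏ` of a set `s` with respect to a weight `w`. An
infinite fibre contributes the junk coefficient `0`; see `FiniteFibers`. -/
noncomputable def growthSeries (w : α → ℕ) (s : Set α) : PowerSeries ℤ :=
  PowerSeries.mk fun k => ((s ∩ w ⁻¹' {k}).ncard : ℤ)

theorem FiniteFibers.mono (ht : FiniteFibers w t) (hst : s ⊆ t) : FiniteFibers w s :=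
  fun k => (ht k).subset (Set.inter_subset_inter_left _ hst)

theorem FiniteFibers.image {w' : β → ℕ} {f : α → β} (hf : ∀ x ∈ s, w' (f x) = w x)
    (hs : FiniteFibers w s) : FiniteFibers w' (f '' s) := by
  refine fun k => ((hs k).image f).subset ?_
  rintro _ ⟨⟨x, hx, rfl⟩, hk⟩
  exact ⟨x, ⟨hx, (hf x hx).symm.trans hk⟩, rfl⟩

theorem growthSeries_empty : growthSeries w ∅ = 0 := by
  ext k
  simp [growthSeries]

theorem growthSeries_union_add_inter (hs : FiniteFibers w s) (ht : FiniteFibers w t) :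
    growthSeries w (s ∪ t) + growthSeries w (s ∩ t) = growthSeries w s + growthSeries w t := by
  ext k
  have h := Set.ncard_union_add_ncard_inter _ _ (hs k) (ht k)
  rw [← Set.union_inter_distrib_right, ← Set.inter_inter_distrib_right] at h
  simpa only [growthSeries, map_add, PowerSeries.coeff_mk] using mod_cast h

theorem growthSeries_inter_add_sdiff (hs : FiniteFibers w s) (t : Set α) :
    growthSeries w (s ∩ t) + growthSeries w (s \ t) = growthSeries w s := by
  have h := growthSeries_union_add_inter (hs.mono (s.inter_subset_left (t := t)))
    (hs.mono (s.sdiff_subset (t := t)))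
  rwa [Set.inter_union_sdiff, Set.disjoint_sdiff_inter.symm.inter_eq, growthSeries_empty,
    add_zero, eq_comm] at h

theorem growthSeries_image {w' : β → ℕ} {f : α → β} (hf : s.InjOn f) {c : ℕ}
    (hw : ∀ x ∈ s, w' (f x) = w x + c) :
    growthSeries w' (f '' s) = PowerSeries.X ^ c * growthSeries w s := by
  ext k
  have hfib : f '' s ∩ w' ⁻¹' {k} = f '' (s ∩ {x | w x + c = k}) := by
    ext y
    constructor
    · rintro ⟨⟨x, hx, rfl⟩, hk⟩
      exact ⟨x, ⟨hx, (hw x hx).symm.trans hk⟩, rfl⟩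
    · rintro ⟨x, ⟨hx, hk⟩, rfl⟩
      exact ⟨⟨x, hx, rfl⟩, (hw x hx).trans hk⟩
  simp only [growthSeries, PowerSeries.coeff_mk, PowerSeries.coeff_X_pow_mul', hfib,
    (hf.mono Set.inter_subset_left).ncard_image]
  split_ifs with hk
  · congr 2
    ext x
    simp [eq_tsub_iff_add_eq_of_le hk]
  · have hempty : {x | w x + c = k} = ∅ := Set.eq_empty_of_forall_notMem fun x hx => hk (by
      rw [← show w x + c = k from hx]
      exact Nat.le_add_left _ _)
    simp [hempty]

theorem growthSeries_singleton (x : α) : growthSeries w {x} = PowerSeries.X ^ w x := by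
  ext k
  by_cases hk : k = w x
  · simp [growthSeries, PowerSeries.coeff_X_pow, hk, Set.inter_eq_left.2]
  · have : ({x} : Set α) ∩ w ⁻¹' {k} = ∅ := by
      simpa [Set.singleton_inter_eq_empty] using Ne.symm hk
    simp [growthSeries, PowerSeries.coeff_X_pow, hk, this]

theorem growthSeries_eq_sum_fiber {ι : Type*} [Fintype ι] (f : α → ι) (hs : FiniteFibers w s) :
    growthSeries w s = ∑ i, growthSeries w (s ∩ f ⁻¹' {i}) := by
  classical
  ext k
  have hfib (i : ι) : s ∩ f ⁻¹' {i} ∩ w ⁻¹' {k} = ↑{x ∈ (hs k).toFinset | f x = i} := by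
    ext x
    simp [and_right_comm]
  simp only [growthSeries, map_sum, PowerSeries.coeff_mk, hfib, Set.ncard_coe_finset,
    Set.ncard_eq_toFinset_card _ (hs k)]
  exact mod_cast Finset.card_eq_sum_card_fiberwise fun x _ =>
    Finset.mem_coe.2 (Finset.mem_univ (f x))

theorem isRationalSeries_growthSeries_of_finite (hs : s.Finite) :
    IsRationalSeries (growthSeries w s) := by
  have hfin (t : Set α) (ht : t.Finite) : FiniteFibers w t :=
    fun k => ht.subset Set.inter_subset_left
  induction s, hs using Set.Finite.induction_on with
  | empty => simpa [growthSeries_empty] using IsRationalSeries.coe 0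
  | @insert x s hx hs ih =>
    have h := growthSeries_union_add_inter (hfin {x} (Set.finite_singleton x)) (hfin s hs)
    rw [Set.singleton_inter_eq_empty.2 hx, growthSeries_empty, add_zero,
      growthSeries_singleton] at h
    rw [← Set.singleton_union, h]
    simpa using (IsRationalSeries.coe (Polynomial.X ^ w x)).add ih

theorem isRationalSeries_growthSeries_of_fiberwise {ι : Type*} [Finite ι] (f : α → ι)
    (hs : FiniteFibers w s)
    (h : ∀ i, IsRationalSeries (growthSeries w (s ∩ f ⁻¹' {i}))) :
    IsRationalSeries (growthSeries w s) := by
  have := Fintype.ofFinite ι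
  rw [growthSeries_eq_sum_fiber f hs]
  exact IsRationalSeries.sum fun i _ => h i

/-- Inclusion–exclusion: the overlap of `s j` with the other sets is a union of sets in `P`. -/
theorem isRationalSeries_growthSeries_biUnion {P : Set α → Prop}
    (hP : ∀ s, P s → IsRationalSeries (growthSeries w s)) (hinter : ∀ s t, P s → P t → P (s ∩ t))
    {ι : Type*} {I : Set ι} (hI : I.Finite) {s : ι → Set α} (hs : ∀ i ∈ I, P (s i))
    (hfin : FiniteFibers w (⋃ i ∈ I, s i)) :
    IsRationalSeries (growthSeries w (⋃ i ∈ I, s i)) := by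
  induction I, hI using Set.Finite.induction_on generalizing s with
  | empty => simpa [growthSeries_empty] using IsRationalSeries.coe 0
  | @insert j I _ _ ih =>
    rw [Set.biUnion_insert] at hfin ⊢
    have hI : ∀ i ∈ I, P (s i) := fun i hi => hs i (Set.mem_insert_of_mem j hi)
    have hj : P (s j) := hs j (Set.mem_insert j I)
    have hrest := ih hI (hfin.mono Set.subset_union_right)
    have hoverlap := ih (fun i hi => hinter _ _ hj (hI i hi))
      (hfin.mono ((Set.inter_iUnion₂ (s j) fun i _ => s i).ge.trans
        (Set.inter_subset_left.trans Set.subset_union_left)))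
    rw [← Set.inter_iUnion₂] at hoverlap
    rw [eq_sub_of_add_eq (growthSeries_union_add_inter (hfin.mono Set.subset_union_left)
      (hfin.mono Set.subset_union_right))]
    exact ((hP _ hj).add hrest).sub hoverlap

theorem X_pow_sub_one_mul_growthSeries (hs : FiniteFibers w s) {f : α → α} (hf : s.InjOn f)
    {c : ℕ} (hw : ∀ x ∈ s, w (f x) = w x + c) :
    (PowerSeries.X ^ c - 1) * growthSeries w s =
      PowerSeries.X ^ c * growthSeries w (s \ f ⁻¹' s) - growthSeries w (s \ f '' s) := by
  have hmoved : growthSeries w (s ∩ f '' s) = PowerSeries.X ^ c * growthSeries w (s ∩ f ⁻¹' s) := by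
    rw [Set.inter_comm, ← Set.image_inter_preimage]
    exact growthSeries_image (hf.mono Set.inter_subset_left) fun x hx => hw x hx.1
  have hsource := growthSeries_inter_add_sdiff hs (f ⁻¹' s)
  have htarget := growthSeries_inter_add_sdiff hs (f '' s)
  linear_combination htarget - hmoved - PowerSeries.X ^ c * hsource

theorem isRationalSeries_growthSeries_of_shift (hs : FiniteFibers w s) {f : α → α}
    (hf : s.InjOn f) {c : ℕ} (hc : 0 < c) (hw : ∀ x ∈ s, w (f x) = w x + c)
    (hstart : IsRationalSeries (growthSeries w (s \ f '' s)))
    (hend : IsRationalSeries (growthSeries w (s \ f ⁻¹' s))) :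
    IsRationalSeries (growthSeries w s) := by
  have hne : (Polynomial.X ^ c - 1 : Polynomial ℤ) ≠ 0 := Polynomial.X_pow_sub_C_ne_zero hc 1
  refine IsRationalSeries.of_coe_mul hne ?_
  rw [Polynomial.coe_sub, Polynomial.coe_pow, Polynomial.coe_X, Polynomial.coe_one,
    X_pow_sub_one_mul_growthSeries hs hf hw]
  simpa using (hend.coe_mul (Polynomial.X ^ c)).sub hstart

end GrowthSeries

section Noetherian

theorem exists_finite_subset_forall_exists_le {α : Type*} [PartialOrder α] [WellQuasiOrderedLE α]
    (D : Set α) : ∃ D' ⊆ D, D'.Finite ∧ ∀ x ∈ D, ∃ y ∈ D', y ≤ x := by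
  refine ⟨{x | Minimal (· ∈ D) x}, setOfPred_minimal_subset _,
    WellQuasiOrderedLE.finite_of_isAntichain (setOfPred_minimal_antichain _), fun x hx => ?_⟩
  obtain ⟨y, hle, hy⟩ := exists_minimal_le_of_wellFoundedLT (· ∈ D) x hx
  exact ⟨y, hy, hle⟩

variable {M : Type*} [AddCommMonoid M]

/-- By Dickson's lemma, finitely generated modules over the monoid `Q` are Noetherian. -/
theorem exists_finite_eq_add_of_add_mem {Q : AddSubmonoid M} (hQ : Q.FG) {E W : Set M}
    (hE : E.Finite) (hW : W ⊆ E + Q) (hadd : ∀ x ∈ W, ∀ q ∈ Q, x + q ∈ W) :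
    ∃ E' : Set M, E'.Finite ∧ W = E' + Q := by
  obtain ⟨n, f, rfl⟩ := AddSubmonoid.fg_iff_exists_fin_addMonoidHom.1 hQ
  choose D hDsub hDfin hD using fun e : M =>
    exists_finite_subset_forall_exists_le {x | e + f x ∈ W}
  refine ⟨⋃ e ∈ E, (fun x => e + f x) '' D e, hE.biUnion fun e _ => (hDfin e).image _, ?_⟩
  refine Set.Subset.antisymm (fun x hx => ?_) (Set.add_subset_iff.2 fun x hx q hq => ?_)
  · obtain ⟨e, he, _, ⟨u, rfl⟩, rfl⟩ := hW hx
    obtain ⟨v, hv, hle⟩ := hD e u hx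
    obtain ⟨d, rfl⟩ := exists_add_of_le hle
    refine ⟨e + f v, Set.mem_biUnion he ⟨v, hv, rfl⟩, f d, ⟨d, rfl⟩, ?_⟩
    simp only [map_add, add_assoc]
  · obtain ⟨e, -, v, hv, rfl⟩ := Set.mem_iUnion₂.1 hx
    exact hadd _ (hDsub e hv) q hq

theorem exists_finite_setOf_add_eq_add [IsCancelAdd M] {ι : Type*} [Finite ι]
    (a b : (ι → ℕ) →+ M) (e e' : M) :
    ∃ D : Set (ι → ℕ), D.Finite ∧
      {z | e + a z = e' + b z} = D + (a.eqLocusM b : Set (ι → ℕ)) := by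
  obtain ⟨D, hDsub, hDfin, hD⟩ := exists_finite_subset_forall_exists_le {z | e + a z = e' + b z}
  refine ⟨D, hDfin, Set.Subset.antisymm (fun z hz => ?_) (Set.add_subset_iff.2 fun z hz d hd => ?_)⟩
  · obtain ⟨y, hy, hle⟩ := hD z hz
    obtain ⟨d, rfl⟩ := exists_add_of_le hle
    have hy' : e + a y = e' + b y := hDsub hy
    have hz' : e + a (y + d) = e' + b (y + d) := hz
    rw [map_add, map_add, ← add_assoc, ← add_assoc, hy'] at hz'
    exact ⟨y, hy, d, add_left_cancel hz', rfl⟩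
  · have hz' : e + a z = e' + b z := hDsub hz
    have hd' : a d = b d := hd
    simp only [Set.mem_ofPred_eq, map_add, ← add_assoc, hz', hd']

end Noetherian

section Hilbert

variable {M : Type*} [AddCommMonoid M] {h : M →+ ℕ}

theorem add_closure_insert (E : Set M) (q : M) (t : Set M) :
    E + (AddSubmonoid.closure (insert q t) : Set M) =
      (E + AddSubmonoid.closure t) ∪
        (q + ·) '' (E + (AddSubmonoid.closure (insert q t) : Set M)) := by
  have hq : q ∈ AddSubmonoid.closure (insert q t) :=
    AddSubmonoid.subset_closure (Set.mem_insert q t)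
  have hle := AddSubmonoid.closure_mono (Set.subset_insert q t)
  refine Set.Subset.antisymm ?_ (Set.union_subset (Set.add_subset_add_left hle) ?_)
  · rintro _ ⟨e, he, c, hc, rfl⟩
    rw [Set.insert_eq, AddSubmonoid.closure_union, SetLike.mem_coe, AddSubmonoid.mem_sup] at hc
    obtain ⟨_, hn, r, hr, rfl⟩ := hc
    obtain ⟨n, rfl⟩ := AddSubmonoid.mem_closure_singleton.1 hn
    cases n with
    | zero => exact Or.inl ⟨e, he, r, hr, by simp⟩
    | succ n =>
      refine Or.inr ⟨e + (n • q + r), ⟨e, he, _, add_mem (nsmul_mem hq n) (hle hr), rfl⟩, ?_⟩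
      simp only [succ_nsmul]
      abel
  · rintro _ ⟨_, ⟨e, he, c, hc, rfl⟩, rfl⟩
    exact ⟨e, he, q + c, add_mem hq hc, add_left_comm e q c⟩

theorem sdiff_sdiff_image_sdiff {α : Type*} {f : α → α} {X Y Z : Set α} (hZ : Set.MapsTo f Z Z)
    (hY : Y = X ∪ f '' Y) : (Y \ Z) \ f '' (Y \ Z) = X \ (Z ∪ f '' Y) := by
  have himage : Z ∪ f '' (Y \ Z) = Z ∪ f '' Y := by
    refine Set.Subset.antisymm (by gcongr; exact Set.sdiff_subset)
      (Set.union_subset Set.subset_union_left ?_)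
    rintro _ ⟨y, hy, rfl⟩
    by_cases hyZ : y ∈ Z
    · exact Or.inl (hZ hyZ)
    · exact Or.inr ⟨y, ⟨hy, hyZ⟩, rfl⟩
  rw [Set.sdiff_sdiff, himage]
  nth_rw 1 [hY]
  rw [Set.union_sdiff_distrib, Set.sdiff_eq_empty.2 Set.subset_union_right, Set.union_empty]

theorem sdiff_sdiff_preimage_sdiff {α : Type*} {f : α → α} {X Y Z : Set α} (hY : Set.MapsTo f Y Y)
    (hker : Y ∩ f ⁻¹' Z = X ∪ f '' (Y ∩ f ⁻¹' Z)) : (Y \ Z) \ f ⁻¹' (Y \ Z) = X \ Z := by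
  have hkerZ : f '' (Y ∩ f ⁻¹' Z) ⊆ Z := by
    rintro _ ⟨y, hy, rfl⟩
    exact hy.2
  calc (Y \ Z) \ f ⁻¹' (Y \ Z) = (Y ∩ f ⁻¹' Z) \ Z := by
        ext y
        have := @hY y
        simp only [Set.mem_sdiff, Set.mem_inter_iff, Set.mem_preimage]
        tauto
    _ = X \ Z := by
        rw [hker, Set.union_sdiff_distrib, Set.sdiff_eq_empty.2 hkerZ, Set.union_empty]

/-- The Hilbert–Serre theorem, with the quotient of two modules replaced by a difference `Y \ Z`.
As there, one generator `q` is removed by passing to the kernel and cokernel of adding `q`. -/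
theorem isRationalSeries_growthSeries_add_closure_sdiff [IsCancelAdd M] {t : Set M}
    (ht : t.Finite) (hpos : ∀ q ∈ t, 0 < h q) {E Z : Set M} (hE : E.Finite)
    (hZ : ∀ z ∈ Z, ∀ q ∈ AddSubmonoid.closure t, z + q ∈ Z)
    (hfin : FiniteFibers h ((E + AddSubmonoid.closure t) \ Z)) :
    IsRationalSeries (growthSeries h ((E + AddSubmonoid.closure t) \ Z)) := by
  induction t, ht using Set.Finite.induction_on generalizing E Z with
  | empty =>
    refine isRationalSeries_growthSeries_of_finite (Set.Finite.sdiff ?_)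
    simpa using hE
  | @insert q t _ ht ih =>
    set Q := AddSubmonoid.closure (insert q t)
    set Y : Set M := E + Q
    have hqQ : q ∈ Q := AddSubmonoid.subset_closure (Set.mem_insert q t)
    have htQ : AddSubmonoid.closure t ≤ Q := AddSubmonoid.closure_mono (Set.subset_insert q t)
    have hpos_t : ∀ p ∈ t, 0 < h p := fun p hp => hpos p (Set.mem_insert_of_mem q hp)
    have hY_add : ∀ y ∈ Y, ∀ p ∈ Q, y + p ∈ Y := by
      rintro _ ⟨e, he, r, hr, rfl⟩ p hp
      exact ⟨e, he, r + p, add_mem hr hp, (add_assoc e r p).symm⟩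
    have hqY : Set.MapsTo (q + ·) Y Y := fun y hy => by
      simpa only [add_comm q] using hY_add y hy q hqQ
    have hqZ : Set.MapsTo (q + ·) Z Z := fun z hz => by
      simpa only [add_comm q] using hZ z hz q hqQ
    obtain ⟨E', hE', hker⟩ : ∃ E' : Set M, E'.Finite ∧ Y ∩ (q + ·) ⁻¹' Z = E' + Q :=
      exists_finite_eq_add_of_add_mem ((AddSubmonoid.fg_iff Q).2 ⟨_, rfl, ht.insert q⟩) hE
        Set.inter_subset_left fun y hy p hp => ⟨hY_add y hy.1 p hp, by
          simpa only [Set.mem_preimage, add_assoc] using hZ _ hy.2 p hp⟩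
    have hkernel := sdiff_sdiff_preimage_sdiff hqY (hker.symm ▸ add_closure_insert E' q t)
    have hcokernel := sdiff_sdiff_image_sdiff hqZ (add_closure_insert E q t)
    refine isRationalSeries_growthSeries_of_shift hfin (add_right_injective q).injOn
      (hpos q (Set.mem_insert q t)) (fun y _ => by rw [map_add, add_comm]) ?_ ?_
    · rw [hcokernel]
      refine ih hpos_t hE ?_ (hcokernel ▸ hfin.mono Set.sdiff_subset)
      rintro z (hz | ⟨y, hy, rfl⟩) p hp
      · exact Or.inl (hZ z hz p (htQ hp))
      · exact Or.inr ⟨y + p, hY_add y hy p (htQ hp), (add_assoc q y p).symm⟩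
    · rw [hkernel]
      exact ih hpos_t hE' (fun z hz p hp => hZ z hz p (htQ hp))
        (hkernel ▸ hfin.mono Set.sdiff_subset)

/-- A finite union of translates of a finitely generated submonoid `Q` on whose nonzero elements
the degree `h` is positive, that is, a finitely generated module over a positively graded monoid. -/
def IsPositivelyGradedFG (h : M →+ ℕ) (Y : Set M) : Prop :=
  ∃ (E : Set M) (Q : AddSubmonoid M),
    E.Finite ∧ Q.FG ∧ (∀ q ∈ Q, q ≠ 0 → 0 < h q) ∧ Y = E + (Q : Set M)

namespace IsPositivelyGradedFG

variable [IsCancelAdd M] {Y Y' : Set M}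

theorem isRationalSeries_growthSeries (hY : IsPositivelyGradedFG h Y) (hfin : FiniteFibers h Y) :
    IsRationalSeries (growthSeries h Y) := by
  obtain ⟨E, Q, hE, hQ, hpos, rfl⟩ := hY
  obtain ⟨t, rfl, ht⟩ := (AddSubmonoid.fg_iff Q).1 hQ
  rw [← AddSubmonoid.closure_sdiff_singleton_zero] at hfin hpos ⊢
  have h := isRationalSeries_growthSeries_add_closure_sdiff (h := h) (Z := ∅) (E := E)
    (ht.sdiff (t := {0})) (fun q hq => hpos q (AddSubmonoid.subset_closure hq) hq.2) hE
    (fun _ hz => absurd hz (Set.notMem_empty _))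
  simp only [Set.sdiff_empty] at h
  exact h hfin

theorem inter (hY : IsPositivelyGradedFG h Y) (hY' : IsPositivelyGradedFG h Y') :
    IsPositivelyGradedFG h (Y ∩ Y') := by
  obtain ⟨E, Q, hE, hQ, hpos, rfl⟩ := hY
  obtain ⟨E', Q', hE', hQ', -, rfl⟩ := hY'
  obtain ⟨m, f, rfl⟩ := AddSubmonoid.fg_iff_exists_fin_addMonoidHom.1 hQ
  obtain ⟨n, g, rfl⟩ := AddSubmonoid.fg_iff_exists_fin_addMonoidHom.1 hQ'
  let a : (Fin m ⊕ Fin n → ℕ) →+ M := f.comp (LinearMap.funLeft ℕ ℕ Sum.inl).toAddMonoidHom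
  let b : (Fin m ⊕ Fin n → ℕ) →+ M := g.comp (LinearMap.funLeft ℕ ℕ Sum.inr).toAddMonoidHom
  choose D hDfin hD using exists_finite_setOf_add_eq_add a b
  refine ⟨⋃ e ∈ E, ⋃ e' ∈ E', (e + a ·) '' D e e', (a.eqLocusM b).map a,
    hE.biUnion fun e _ => hE'.biUnion fun e' _ => (hDfin e e').image _,
    (AddSubmonoid.fg_eqLocusM a b).map a, ?_, Set.Subset.antisymm ?_ ?_⟩
  · rintro _ ⟨z, -, rfl⟩ hz
    exact hpos _ ⟨_, rfl⟩ hz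
  · rintro _ ⟨⟨e, he, _, ⟨u, rfl⟩, rfl⟩, ⟨e', he', _, ⟨v, rfl⟩, heq⟩⟩
    have hz : Sum.elim u v ∈ {z | e + a z = e' + b z} := heq.symm
    rw [hD] at hz
    obtain ⟨d, hd, r, hr, hdr⟩ := hz
    refine ⟨e + a d, Set.mem_biUnion he (Set.mem_biUnion he' ⟨d, hd, rfl⟩), a r, ⟨r, hr, rfl⟩, ?_⟩
    change e + a d + a r = e + a (Sum.elim u v)
    rw [← hdr, map_add, add_assoc]
  · rintro _ ⟨_, hx, _, ⟨r, hr, rfl⟩, rfl⟩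
    obtain ⟨e, he, hx⟩ := Set.mem_iUnion₂.1 hx
    obtain ⟨e', he', d, hd, rfl⟩ := Set.mem_iUnion₂.1 hx
    have hdr : d + r ∈ {z | e + a z = e' + b z} := by
      rw [hD]
      exact Set.add_mem_add hd hr
    have hsum : e + a d + a r = e + a (d + r) := by rw [map_add, add_assoc]
    have hsum' : e + a d + a r = e' + b (d + r) := hsum.trans hdr
    exact ⟨⟨e, he, _, ⟨_, rfl⟩, hsum.symm⟩, ⟨e', he', _, ⟨_, rfl⟩, hsum'.symm⟩⟩

end IsPositivelyGradedFG

variable [IsCancelAdd M]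

theorem isPositivelyGradedFG_of_isProperLinearSet {Y : Set M} (hY : IsProperLinearSet Y)
    (hfin : FiniteFibers h Y) : IsPositivelyGradedFG h Y := by
  obtain ⟨c, t, ht, hli, rfl⟩ := hY
  have hpos : ∀ p ∈ t, 0 < h p := by
    refine fun p hp => Nat.pos_of_ne_zero fun hp0 => ?_
    have hinj : Function.Injective fun n : ℕ => c + n • p := fun n m hnm => by
      have hsingle := @hli (Finsupp.single ⟨p, hp⟩ n) (Finsupp.single ⟨p, hp⟩ m) (by
        simpa [Finsupp.linearCombination_single] using hnm)
      simpa using congrArg (· ⟨p, hp⟩) hsingle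
    refine Set.infinite_range_of_injective hinj ((hfin (h c)).subset ?_)
    rintro _ ⟨n, rfl⟩
    exact ⟨⟨n • p, nsmul_mem (AddSubmonoid.subset_closure hp) n, rfl⟩, by simp [hp0]⟩
  refine ⟨{c}, AddSubmonoid.closure t, Set.finite_singleton c,
    (AddSubmonoid.fg_iff _).2 ⟨t, rfl, ht⟩, fun q hq => ?_, (Set.singleton_vadd).symm⟩
  induction hq using AddSubmonoid.closure_induction with
  | mem p hp => exact fun _ => hpos p hp
  | zero => exact fun h0 => absurd rfl h0
  | add x y _ _ hx hy =>
    intro hxy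
    rw [map_add]
    by_cases hx0 : x = 0
    · exact Nat.add_pos_right _ (hy fun hy0 => hxy (by rw [hx0, hy0, add_zero]))
    · exact Nat.add_pos_left (hx hx0) _

theorem isRationalSeries_growthSeries_of_isSemilinearSet {Y : Set M} (hY : IsSemilinearSet Y)
    (hfin : FiniteFibers h Y) : IsRationalSeries (growthSeries h Y) := by
  obtain ⟨T, hT, rfl⟩ := isProperSemilinearSet_iff.1 hY.isProperSemilinearSet
  rw [Set.sUnion_eq_biUnion] at hfin ⊢
  refine isRationalSeries_growthSeries_biUnion
    (P := fun Y => IsPositivelyGradedFG h Y ∧ FiniteFibers h Y)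
    (fun Y hY => hY.1.isRationalSeries_growthSeries hY.2)
    (fun Y Y' hY hY' => ⟨hY.1.inter hY'.1, hY.2.mono Set.inter_subset_left⟩)
    T.finite_toSet (fun Y hY => ?_) hfin
  have hYfin := hfin.mono (Set.subset_biUnion_of_mem (u := id) hY)
  exact ⟨isPositivelyGradedFG_of_isProperLinearSet (hT Y hY) hYfin, hYfin⟩

end Hilbert

section Kleene

variable {Q M : Type*}

/-- `m` is the sum of the labels along a path from `p` to `q` in the graph whose edges from `x` to
`y` are labelled by the elements of `B x y`, all vertices of the path but the last lying in `T`. -/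
inductive IsPathLabel [AddMonoid M] (B : Q → Q → Set M) (T : Set Q) : Q → Q → M → Prop
  | nil (p : Q) : IsPathLabel B T p p 0
  | cons {p x q : Q} {b m : M} (hp : p ∈ T) (hb : b ∈ B p x) (h : IsPathLabel B T x q m) :
      IsPathLabel B T p q (b + m)

namespace IsPathLabel

section AddMonoid

variable [AddMonoid M] {B : Q → Q → Set M} {T T' : Set Q} {p q r : Q} {m m' : M}

theorem mono (hT : T ⊆ T') (h : IsPathLabel B T p q m) : IsPathLabel B T' p q m := by
  induction h with
  | nil p => exact nil p
  | cons hp hb _ ih => exact cons (hT hp) hb ih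

theorem trans (h : IsPathLabel B T p r m) (h' : IsPathLabel B T r q m') :
    IsPathLabel B T p q (m + m') := by
  induction h with
  | nil p => simpa using h'
  | cons hp hb _ ih => simpa only [add_assoc] using cons hp hb (ih h')

/-- The inductive step of Kleene's theorem: cut a path at its visits to `r`. -/
theorem insert_iff : IsPathLabel B (insert r T) p q m ↔ IsPathLabel B T p q m ∨
    m ∈ {m₁ | IsPathLabel B T p r m₁} +
      (AddSubmonoid.closure (⋃ x, B r x + {m₂ | IsPathLabel B T x r m₂}) : Set M) +
      ⋃ x, B r x + {m₃ | IsPathLabel B T x q m₃} := by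
  constructor
  · intro h
    induction h with
    | nil p => exact Or.inl (nil p)
    | @cons p x q b m hp hb _ ih =>
      rcases hp with rfl | hp
      · rcases ih with h | ⟨_, ⟨m₁, h₁, m₂, h₂, rfl⟩, m₃, h₃, rfl⟩
        · exact Or.inr ⟨0, ⟨0, nil p, 0, zero_mem _, add_zero 0⟩, b + m,
            Set.mem_iUnion.2 ⟨x, b, hb, m, h, rfl⟩, zero_add _⟩
        · refine Or.inr ⟨_, ⟨0, nil p, b + m₁ + m₂, add_mem ?_ h₂, zero_add _⟩, m₃, h₃, ?_⟩
          · exact AddSubmonoid.subset_closure (Set.mem_iUnion.2 ⟨x, b, hb, m₁, h₁, rfl⟩)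
          · simp only [add_assoc]
      · rcases ih with h | ⟨_, ⟨m₁, h₁, m₂, h₂, rfl⟩, m₃, h₃, rfl⟩
        · exact Or.inl (cons hp hb h)
        · exact Or.inr ⟨_, ⟨b + m₁, cons hp hb h₁, m₂, h₂, rfl⟩, m₃, h₃, by simp only [add_assoc]⟩
  · have hT := Set.subset_insert r T
    have hr {y : Q} {m : M} (hm : m ∈ ⋃ x, B r x + {m | IsPathLabel B T x y m}) :
        IsPathLabel B (insert r T) r y m := by
      obtain ⟨x, b, hb, m, h, rfl⟩ := Set.mem_iUnion.1 hm
      exact cons (Set.mem_insert r T) hb (h.mono hT)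
    rintro (h | ⟨_, ⟨m₁, h₁, m₂, h₂, rfl⟩, m₃, h₃, rfl⟩)
    · exact h.mono hT
    · refine ((h₁.mono hT).trans ?_).trans (hr h₃)
      induction h₂ using AddSubmonoid.closure_induction with
      | mem m hm => exact hr hm
      | zero => exact nil r
      | add _ _ _ _ h h' => exact h.trans h'

end AddMonoid

theorem isSemilinearSet [AddCommMonoid M] [Finite Q] {B : Q → Q → Set M}
    (hB : ∀ p q, IsSemilinearSet (B p q)) (T : Set Q) (p q : Q) :
    IsSemilinearSet {m | IsPathLabel B T p q m} := by
  induction T, T.toFinite using Set.Finite.induction_on generalizing p q with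
  | empty =>
    refine .of_finite ((Set.finite_singleton 0).subset ?_)
    rintro _ (_ | ⟨hp, -, -⟩)
    · rfl
    · exact absurd hp (Set.notMem_empty p)
  | @insert r T _ _ ih =>
    have hstep (y : Q) : IsSemilinearSet (⋃ x, B r x + {m | IsPathLabel B T x y m}) :=
      .iUnion fun x => (hB r x).add (ih x y)
    simp only [insert_iff]
    exact (ih p q).union (((ih p r).add (hstep r).closure).add (hstep q))

end IsPathLabel

end Kleene

section LowerEnvelope

variable {A : Type*}

/-- The pairs `(a, k)` for which `k` is the least number with `(a, k) ∈ L`. -/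
def lowerEnvelope (L : Set (A × ℕ)) : Set (A × ℕ) :=
  {x | IsLeast {k | (x.1, k) ∈ L} x.2}

theorem isSemilinearSet_lowerEnvelope [AddCommMonoid A] {L : Set (A × ℕ)}
    (hL : IsSemilinearSet L) : IsSemilinearSet (lowerEnvelope L) := by
  have hup : IsSemilinearSet
      ({((0, 1) : A × ℕ)} + (AddSubmonoid.closure {((0, 1) : A × ℕ)} : Set (A × ℕ))) :=
    .add (.singleton _) (.closure (.singleton _))
  convert hL.sdiff (hL.add hup) using 1
  ext ⟨a, k⟩
  refine and_congr Iff.rfl ⟨?_, fun hk j hj => ?_⟩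
  · rintro hk ⟨⟨a', j⟩, hj, _, ⟨_, rfl, z, hz, rfl⟩, heq⟩
    obtain ⟨n, rfl⟩ := AddSubmonoid.mem_closure_singleton.1 hz
    simp only [Prod.smul_mk, Prod.mk_add_mk, Prod.mk.injEq, smul_zero, add_zero] at heq
    obtain ⟨rfl, rfl⟩ := heq
    have : j + (1 + n • 1) ≤ j := hk hj
    simp at this
  · by_contra! hlt
    refine hk ⟨(a, j), hj, _, ⟨_, rfl, (k - j - 1) • (0, 1), ?_, rfl⟩, ?_⟩
    · exact AddSubmonoid.mem_closure_singleton.2 ⟨_, rfl⟩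
    · ext
      · simp
      · simp only [Prod.snd_add, Prod.smul_snd, smul_eq_mul, mul_one]
        omega

end LowerEnvelope

section Cosets

variable {G : Type*} [Group G]

theorem isLeast_cosetWeight {S : Set G} (hS : Submonoid.closure S = ⊤) (ω : G → ℕ)
    (F : Subgroup G) (C : Quotient (QuotientGroup.rightRel F)) :
    IsLeast {k | ∃ l : List G, (∀ s ∈ l, s ∈ S) ∧ Quotient.mk _ l.prod = C ∧ (l.map ω).sum = k}
      (cosetWeight S ω F C) := by
  have hword (g : G) : wordWeight S ω g ∈
      {k | ∃ l : List G, (∀ s ∈ l, s ∈ S) ∧ l.prod = g ∧ (l.map ω).sum = k} := by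
    obtain ⟨l, hl, hg⟩ := Submonoid.exists_list_of_mem_closure (hS ▸ Submonoid.mem_top g)
    exact Nat.sInf_mem ⟨_, l, hl, hg, rfl⟩
  have hcoset : cosetWeight S ω F C ∈ {k | ∃ g, Quotient.mk _ g = C ∧ wordWeight S ω g = k} :=
    Nat.sInf_mem ⟨_, C.out, C.out_eq, rfl⟩
  constructor
  · obtain ⟨g, hg, hgk⟩ := hcoset
    obtain ⟨l, hl, hlg, hlk⟩ := hword g
    exact ⟨l, hl, hlg ▸ hg, hlk.trans hgk⟩
  · rintro _ ⟨l, hl, rfl, rfl⟩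
    calc cosetWeight S ω F (Quotient.mk _ l.prod) ≤ wordWeight S ω l.prod :=
          Nat.sInf_le ⟨l.prod, rfl, rfl⟩
      _ ≤ (l.map ω).sum := Nat.sInf_le ⟨l, hl, rfl, rfl⟩

theorem finiteFibers_sum_map {α : Type*} {S : Set α} (hS : S.Finite) {ω : α → ℕ}
    (hω : ∀ s ∈ S, 0 < ω s) :
    FiniteFibers (fun l : List α => (l.map ω).sum) {l | ∀ s ∈ l, s ∈ S} := by
  have := hS.to_subtype
  refine fun k => ((List.finite_length_le S k).image (List.map Subtype.val)).subset ?_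
  rintro l ⟨hl, hk⟩
  refine ⟨l.attachWith (· ∈ S) hl, ?_, List.attachWith_map_subtype_val hl⟩
  have hlength := List.length_le_sum_of_one_le (l.map ω) (by
    simpa [Nat.one_le_iff_ne_zero, Nat.pos_iff_ne_zero] using fun s hs => (hω s (hl s hs)).ne')
  simp only [Set.mem_ofPred_eq, List.length_attachWith]
  exact (List.length_map (as := l) ω ▸ hlength).trans hk.le

theorem finiteFibers_cosetWeight {S : Set G} (hfin : S.Finite)
    (hS : Submonoid.closure S = ⊤) {ω : G → ℕ} (hω : ∀ s ∈ S, 0 < ω s) (F : Subgroup G) :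
    FiniteFibers (cosetWeight S ω F) Set.univ := by
  refine fun k => ((finiteFibers_sum_map hfin hω k).image fun l => Quotient.mk _ l.prod).subset ?_
  rintro C ⟨-, rfl⟩
  obtain ⟨l, hl, hC, hk⟩ := (isLeast_cosetWeight hS ω F C).1
  exact ⟨l, ⟨hl, hk⟩, hC⟩

/-- Coordinates `(state, value)` on the right cosets of `F` for which right multiplication by `g`
changes the state to `step state g` and adds `label state g` to the value. The coset of a word is
then computed by an automaton with labels in the commutative monoid `A`. -/
structure CosetCoordinates (F : Subgroup G) (Q A : Type*) [AddCommMonoid A] where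
  state : Quotient (QuotientGroup.rightRel F) → Q
  value : Quotient (QuotientGroup.rightRel F) → A
  eq_of_state_of_value : ∀ ⦃C C'⦄, state C = state C' → value C = value C' → C = C'
  step : Q → G → Q
  label : Q → G → A
  state_mk_mul : ∀ x g : G, state (Quotient.mk _ (x * g)) = step (state (Quotient.mk _ x)) g
  value_mk_mul : ∀ x g : G, value (Quotient.mk _ (x * g)) =
    value (Quotient.mk _ x) + label (state (Quotient.mk _ x)) g

namespace CosetCoordinates

variable {F : Subgroup G} {Q A : Type*} [AddCommMonoid A] (c : CosetCoordinates F Q A)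
  {S : Set G} {ω : G → ℕ}

/-- The labels of the edges of the automaton of `c`, paired with the weights of the letters. -/
def edgeLabels (S : Set G) (ω : G → ℕ) (p q : Q) : Set (A × ℕ) :=
  (fun s => (c.label p s, ω s)) '' {s ∈ S | c.step p s = q}

/-- The pairs of the value and the weight of a word over `S` whose coset has state `q`. -/
def wordValues (S : Set G) (ω : G → ℕ) (q : Q) : Set (A × ℕ) :=
  {x | ∃ l : List G, (∀ s ∈ l, s ∈ S) ∧ c.state (Quotient.mk _ l.prod) = q ∧
    (c.value (Quotient.mk _ l.prod), (l.map ω).sum) = x}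

theorem isPathLabel_word (g : G) {l : List G} (hl : ∀ s ∈ l, s ∈ S) :
    ∃ a, c.value (Quotient.mk _ (g * l.prod)) = c.value (Quotient.mk _ g) + a ∧
      IsPathLabel (c.edgeLabels S ω) Set.univ (c.state (Quotient.mk _ g))
        (c.state (Quotient.mk _ (g * l.prod))) (a, (l.map ω).sum) := by
  induction l generalizing g with
  | nil => exact ⟨0, by simp, by simpa using .nil _⟩
  | cons s l ih =>
    rw [List.forall_mem_cons] at hl
    obtain ⟨a, hvalue, hpath⟩ := ih (g * s) hl.2
    rw [mul_assoc, c.state_mk_mul g s, ← List.prod_cons] at hpath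
    rw [mul_assoc, c.value_mk_mul g s, ← List.prod_cons, add_assoc] at hvalue
    have hedge : (c.label (c.state (Quotient.mk _ g)) s, ω s) ∈
        c.edgeLabels S ω (c.state (Quotient.mk _ g)) (c.step (c.state (Quotient.mk _ g)) s) :=
      ⟨s, ⟨hl.1, rfl⟩, rfl⟩
    exact ⟨_, hvalue, .cons (Set.mem_univ _) hedge hpath⟩

theorem exists_word_of_isPathLabel {p q : Q} {m : A × ℕ}
    (h : IsPathLabel (c.edgeLabels S ω) Set.univ p q m) {g : G}
    (hg : c.state (Quotient.mk _ g) = p) :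
    ∃ l : List G, (∀ s ∈ l, s ∈ S) ∧ c.state (Quotient.mk _ (g * l.prod)) = q ∧
      (c.value (Quotient.mk _ (g * l.prod)), (l.map ω).sum) =
        (c.value (Quotient.mk _ g), 0) + m := by
  induction h generalizing g with
  | nil p => exact ⟨[], by simp, by simpa using hg, by simp⟩
  | cons _ hb _ ih =>
    obtain ⟨s, ⟨hs, hstep⟩, rfl⟩ := hb
    obtain ⟨l, hl, hstate, hvalue⟩ := ih (g := g * s) (by rw [c.state_mk_mul, hg, hstep])
    refine ⟨s :: l, List.forall_mem_cons.2 ⟨hs, hl⟩, ?_, ?_⟩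
    · rwa [List.prod_cons, ← mul_assoc]
    · rw [Prod.ext_iff] at hvalue ⊢
      simp only [mul_assoc, c.value_mk_mul g s, hg, Prod.fst_add, Prod.snd_add] at hvalue
      simp [hvalue, add_assoc]

theorem wordValues_eq_singleton_add_setOf_isPathLabel (q : Q) :
    c.wordValues S ω q = {(c.value (Quotient.mk _ 1), 0)} +
      {m | IsPathLabel (c.edgeLabels S ω) Set.univ (c.state (Quotient.mk _ 1)) q m} := by
  rw [Set.singleton_add]
  refine Set.Subset.antisymm ?_ ?_
  · rintro _ ⟨l, hl, rfl, rfl⟩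
    obtain ⟨a, hvalue, hpath⟩ := c.isPathLabel_word (ω := ω) 1 hl
    rw [one_mul] at hvalue hpath
    exact ⟨_, hpath, by simp [hvalue]⟩
  · rintro _ ⟨m, hm, rfl⟩
    obtain ⟨l, hl, hstate, hvalue⟩ := c.exists_word_of_isPathLabel hm rfl
    rw [one_mul] at hstate hvalue
    exact ⟨l, hl, hstate, hvalue⟩

theorem isSemilinearSet_wordValues [Finite Q] (hfin : S.Finite) (ω : G → ℕ) (q : Q) :
    IsSemilinearSet (c.wordValues S ω q) := by
  rw [wordValues_eq_singleton_add_setOf_isPathLabel]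
  refine .add (.singleton _) (IsPathLabel.isSemilinearSet (fun p q => .of_finite ?_) _ _ _)
  exact (hfin.subset (Set.sep_subset S _)).image _

theorem image_cosetWeight_eq_lowerEnvelope (hS : Submonoid.closure S = ⊤) (ω : G → ℕ) (q : Q) :
    (fun C => (c.value C, cosetWeight S ω F C)) '' (c.state ⁻¹' {q}) =
      lowerEnvelope (c.wordValues S ω q) := by
  have hweights (C : Quotient (QuotientGroup.rightRel F)) (hC : c.state C = q) :
      IsLeast {k | (c.value C, k) ∈ c.wordValues S ω q} (cosetWeight S ω F C) := by
    convert isLeast_cosetWeight hS ω F C using 1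
    ext k
    refine exists_congr fun l => and_congr_right fun _ => ?_
    rw [Prod.mk.injEq, ← and_assoc]
    refine and_congr_left fun _ => ⟨fun h => ?_, ?_⟩
    · exact c.eq_of_state_of_value (h.1.trans hC.symm) h.2
    · rintro rfl
      exact ⟨hC, rfl⟩
  ext ⟨a, k⟩
  constructor
  · rintro ⟨C, hC, h⟩
    obtain ⟨rfl, rfl⟩ := Prod.ext_iff.1 h
    exact hweights C hC
  · intro h
    obtain ⟨l, -, hstate, hvalue⟩ := h.1
    obtain ⟨rfl, -⟩ := Prod.ext_iff.1 hvalue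
    exact ⟨_, hstate, Prod.ext rfl ((hweights _ hstate).unique h)⟩

theorem isRationalSeries_growthSeries_cosetWeight [IsCancelAdd A] [Finite Q]
    (c : CosetCoordinates F Q A) (hfin : S.Finite) (hS : Submonoid.closure S = ⊤)
    (hω : ∀ s ∈ S, 0 < ω s) :
    IsRationalSeries (growthSeries (cosetWeight S ω F) Set.univ) := by
  have hweight := finiteFibers_cosetWeight hfin hS hω F
  refine isRationalSeries_growthSeries_of_fiberwise c.state hweight fun q => ?_
  rw [Set.univ_inter]
  have hgraph := c.image_cosetWeight_eq_lowerEnvelope hS ω q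
  have hinj : (c.state ⁻¹' {q}).InjOn fun C => (c.value C, cosetWeight S ω F C) :=
    fun C hC C' hC' h => c.eq_of_state_of_value (hC.trans hC'.symm) (Prod.ext_iff.1 h).1
  have hseries := growthSeries_image hinj (w := cosetWeight S ω F) (w' := AddMonoidHom.snd A ℕ)
    (c := 0) fun _ _ => rfl
  rw [hgraph, pow_zero, one_mul] at hseries
  rw [← hseries]
  refine isRationalSeries_growthSeries_of_isSemilinearSet
    (isSemilinearSet_lowerEnvelope (c.isSemilinearSet_wordValues hfin ω q)) ?_
  rw [← hgraph]
  exact (hweight.mono (Set.subset_univ _)).image fun _ _ => rfl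

end CosetCoordinates

section Transversal

variable {N F : Subgroup G} {T : Set G}

theorem rightRel_iff_equiv_snd_eq_and_mk_equiv_fst_eq [IsMulCommutative N] (hF : F ≤ N)
    (hT : Subgroup.IsComplement (N : Set G) T) {x y : G} :
    QuotientGroup.rightRel F x y ↔ (hT.equiv x).2 = (hT.equiv y).2 ∧
      (QuotientGroup.mk (hT.equiv x).1 : N ⧸ F.subgroupOf N) = QuotientGroup.mk (hT.equiv y).1 := by
  rw [QuotientGroup.rightRel_apply, QuotientGroup.eq,
    mul_comm' ((hT.equiv x).1)⁻¹ (hT.equiv y).1, Subgroup.mem_subgroupOf]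
  have hmul (hsnd : (hT.equiv x).2 = (hT.equiv y).2) :
      ((hT.equiv y).1 * ((hT.equiv x).1)⁻¹ : N) = y * x⁻¹ := by
    change ((hT.equiv y).1 : G) * ((hT.equiv x).1 : G)⁻¹ = y * x⁻¹
    rw [hT.equiv_fst_eq_mul_inv, hT.equiv_fst_eq_mul_inv, hsnd]
    group
  refine ⟨fun hxy => ?_, fun h => hmul h.1 ▸ h.2⟩
  have hy : hT.equiv y = (⟨y * x⁻¹, hF hxy⟩ * (hT.equiv x).1, (hT.equiv x).2) := by
    simpa using hT.equiv_mul_left ⟨y * x⁻¹, hF hxy⟩ x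
  have hsnd : (hT.equiv x).2 = (hT.equiv y).2 := by rw [hy]
  exact ⟨hsnd, (hmul hsnd).symm ▸ hxy⟩

theorem equiv_mul_eq_fst_mul_equiv_snd_mul (hT : Subgroup.IsComplement (N : Set G) T) (x g : G) :
    hT.equiv (x * g) = ((hT.equiv x).1 * (hT.equiv ((hT.equiv x).2 * g)).1,
      (hT.equiv ((hT.equiv x).2 * g)).2) := by
  rw [← hT.equiv_mul_left, ← mul_assoc, hT.equiv_fst_mul_equiv_snd]

open scoped IsMulCommutative in
/-- The coordinates of `F * (n * t)`, for `n ∈ N` and `t` in a right transversal `T` of `N`, are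
the state `t` and the class of `n` in `N / F`. -/
noncomputable def cosetCoordinatesOfIsComplement [IsMulCommutative N] (hF : F ≤ N)
    (hT : Subgroup.IsComplement (N : Set G) T) :
    CosetCoordinates F T (Additive (N ⧸ F.subgroupOf N)) where
  state := Quotient.lift (fun g => (hT.equiv g).2) fun x y h =>
    ((rightRel_iff_equiv_snd_eq_and_mk_equiv_fst_eq hF hT).1 h).1
  value := Quotient.lift (fun g => Additive.ofMul (QuotientGroup.mk (hT.equiv g).1)) fun x y h =>
    ((rightRel_iff_equiv_snd_eq_and_mk_equiv_fst_eq hF hT).1 h).2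
  eq_of_state_of_value := by
    rintro ⟨x⟩ ⟨y⟩ hstate hvalue
    exact Quotient.sound ((rightRel_iff_equiv_snd_eq_and_mk_equiv_fst_eq hF hT).2 ⟨hstate, hvalue⟩)
  step t g := (hT.equiv (t * g)).2
  label t g := Additive.ofMul (QuotientGroup.mk (hT.equiv (t * g)).1)
  state_mk_mul x g := (Prod.ext_iff.1 (equiv_mul_eq_fst_mul_equiv_snd_mul hT x g)).2
  value_mk_mul x g := congrArg (fun n : N => Additive.ofMul (n : N ⧸ F.subgroupOf N))
    (Prod.ext_iff.1 (equiv_mul_eq_fst_mul_equiv_snd_mul hT x g)).1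

end Transversal

end Cosets

open scoped IsMulCommutative in
theorem coset_growth_series_rational_abelian_subgroup_general {G : Type*} [Group G]
    (N : Subgroup G) [N.FiniteIndex] [IsMulCommutative N]
    (S : Finset G) (hS : Submonoid.closure (S : Set G) = ⊤)
    (ω : G → ℕ) (hω : ∀ s ∈ S, 0 < ω s)
    (F : Subgroup G) (hF : F ≤ N) :
    IsRationalSeries (PowerSeries.mk fun k =>
      (Nat.card {C : Quotient (QuotientGroup.rightRel F) //
        cosetWeight (S : Set G) ω F C = k} : ℤ)) := by
  obtain ⟨T, hT, -⟩ := N.exists_isComplement_right 1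
  have : Finite T := hT.finite_right
  have h := (cosetCoordinatesOfIsComplement hF hT).isRationalSeries_growthSeries_cosetWeight
    S.finite_toSet hS hω
  convert h using 1
  ext k
  simp only [growthSeries, PowerSeries.coeff_mk, Set.univ_inter]
  rfl

/-- The coset growth series of a subgroup contained in the finite-index free abelian
normal subgroup of a finitely generated virtually abelian group is rational, for any
finite weighted monoid generating set. -/
theorem coset_growth_series_rational_abelian_subgroup {G : Type*} [Group G]
    (n : ℕ) (N : Subgroup G) (hN : N.Normal) (hNfin : N.FiniteIndex)
    (hNiso : Nonempty (N ≃* Multiplicative (Fin n → ℤ)))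
    (S : Finset G) (hS : Submonoid.closure (S : Set G) = ⊤)
    (ω : G → ℕ) (hω : ∀ s ∈ S, 0 < ω s)
    (F : Subgroup G) (hF : F ≤ N) :
    IsRationalSeries (PowerSeries.mk fun k =>
      (Nat.card {C : Quotient (QuotientGroup.rightRel F) //
        cosetWeight (S : Set G) ω F C = k} : ℤ)) := by
  obtain ⟨e⟩ := hNiso
  have : IsMulCommutative N := ⟨⟨fun x y => e.injective (by rw [map_mul, map_mul, mul_comm])⟩⟩
  exact coset_growth_series_rational_abelian_subgroup_general N S hS ω hω F hF
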